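/- arXiv:math/0505153 — 2 statements merged into one kernel-verified Lean document; each statement's English description precedes it below -/
import Mathlib

section
/- Define the operator T on differentiable functions f : ℝ∖{0} → ℝ by T(f)(x) = f'(x)/x, and let T^n denote its n-th iterate (T^0(f) = f). Then for every n ∈ ℕ and every z ≠ 0, the n-th iterate applied to the hyperbolic cosine satisfies T^n(cosh)(z) = Σ_{k=0}^{∞} z^{2k} / (2^k · k! · C_{2k+2n}), where C_{2m} = (2m)!/(2^m m!). Equivalently, T^n(cosh)(z) = Σ_{k=0}^{∞} 2^n (k+n)! z^{2k} / (k! (2k+2n)!). -/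
/-- The even Gaussian moments `C_{2m} = (2m)!/(2ᵐ m!)`. -/
noncomputable def gaussEvenMoment (m : ℕ) : ℝ :=
  (Nat.factorial (2 * m)) / (2 ^ m * Nat.factorial m)

/-- The operator `T(f)(x) = f'(x)/x`. -/
noncomputable def derivDiv (f : ℝ → ℝ) : ℝ → ℝ := fun x => deriv f x / x

/-!
In the variable `w = x ^ 2` the operator `T` is twice the ordinary derivative: if `f x = g (x ^ 2)`,
then `T f x = 2 * g' (x ^ 2)` away from the origin, hence `T^n f x = 2 ^ n * g⁽ⁿ⁾ (x ^ 2)`. Now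
`cosh x = g (x ^ 2)` for the entire function `g w = ∑ w ^ k / (2 k)!`, whose `n`-th derivative is
found by differentiating its power series term by term.
-/

open Filter Topology
open scoped Nat

section IteratedDeriv

variable {𝕜 F : Type*} [NontriviallyNormedField 𝕜] [NormedAddCommGroup F] [NormedSpace 𝕜 F]

/-- The termwise derivative, with coefficients `(k + 1) a_{k + 1}`, of a one-variable power series
with coefficients `a_k`. Mathlib's `derivSeries` represents the Fréchet derivative; evaluating it
at `1` gives a series for `deriv`. -/
noncomputable def termwiseDeriv (p : FormalMultilinearSeries 𝕜 𝕜 F) :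
    FormalMultilinearSeries 𝕜 𝕜 F :=
  (ContinuousLinearMap.apply 𝕜 F 1).compFormalMultilinearSeries p.derivSeries

lemma coeff_termwiseDeriv (p : FormalMultilinearSeries 𝕜 𝕜 F) (k : ℕ) :
    (termwiseDeriv p).coeff k = (k + 1) • p.coeff (k + 1) :=
  p.derivSeries_coeff_one k

lemma coeff_iterate_termwiseDeriv (p : FormalMultilinearSeries 𝕜 𝕜 F) (n k : ℕ) :
    (termwiseDeriv^[n] p).coeff k = (k + 1).ascFactorial n • p.coeff (k + n) := by
  induction n generalizing k with
  | zero => simp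
  | succ n ih =>
    rw [Function.iterate_succ_apply', coeff_termwiseDeriv, ih, smul_smul, Nat.succ_ascFactorial,
      ← Nat.ascFactorial_succ, Nat.add_right_comm, Nat.add_assoc]

variable {f : 𝕜 → F} {x : 𝕜}

lemma differentiableAt_iteratedDeriv {n : ℕ} (hf : ContDiffAt 𝕜 (n + 1) f x) :
    DifferentiableAt 𝕜 (iteratedDeriv n f) x := by
  rw [← differentiableWithinAt_univ, ← iteratedDerivWithin_univ]
  exact ContDiffWithinAt.differentiableWithinAt_iteratedDerivWithin hf
    (mod_cast n.lt_succ_self) (by simp)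

variable [CompleteSpace F] {p : FormalMultilinearSeries 𝕜 𝕜 F} {r : ENNReal}

lemma hasFPowerSeriesOnBall_deriv (hf : HasFPowerSeriesOnBall f p x r) :
    HasFPowerSeriesOnBall (deriv f) (termwiseDeriv p) x r :=
  ((ContinuousLinearMap.apply 𝕜 F (1 : 𝕜)).comp_hasFPowerSeriesOnBall hf.fderiv).congr
    fun _ _ => fderiv_apply_one_eq_deriv

lemma hasFPowerSeriesOnBall_iteratedDeriv (hf : HasFPowerSeriesOnBall f p x r) (n : ℕ) :
    HasFPowerSeriesOnBall (iteratedDeriv n f) (termwiseDeriv^[n] p) x r := by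
  induction n with
  | zero => simpa using hf
  | succ n ih =>
    rw [iteratedDeriv_succ, Function.iterate_succ_apply']
    exact hasFPowerSeriesOnBall_deriv ih

end IteratedDeriv

section DerivDiv

variable {g : ℝ → ℝ} {z : ℝ}

lemma derivDiv_congr {f₁ f₂ : ℝ → ℝ} (h : f₁ =ᶠ[𝓝 z] f₂) : derivDiv f₁ z = derivDiv f₂ z := by
  rw [derivDiv, derivDiv, h.deriv_eq]

lemma derivDiv_comp_sq (hg : DifferentiableAt ℝ g (z ^ 2)) (hz : z ≠ 0) :
    derivDiv (fun x => g (x ^ 2)) z = 2 * deriv g (z ^ 2) := by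
  have hderiv : HasDerivAt (fun x => g (x ^ 2)) (deriv g (z ^ 2) * (2 * z)) z := by
    simpa [Function.comp_def] using
      HasDerivAt.comp (h := fun x => x ^ 2) z hg.hasDerivAt (hasDerivAt_pow 2 z)
  rw [derivDiv, hderiv.deriv]
  field_simp

lemma iterate_derivDiv_comp_sq {n : ℕ} (hg : ContDiffAt ℝ n g (z ^ 2)) (hz : z ≠ 0) :
    derivDiv^[n] (fun x => g (x ^ 2)) z = 2 ^ n * iteratedDeriv n g (z ^ 2) := by
  induction n generalizing z with
  | zero => simp
  | succ n ih =>
    have hnear : derivDiv^[n] (fun x => g (x ^ 2)) =ᶠ[𝓝 z]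
        fun x => 2 ^ n * iteratedDeriv n g (x ^ 2) := by
      have hsmooth : ∀ᶠ x in 𝓝 z, ContDiffAt ℝ n g (x ^ 2) :=
        (continuous_pow 2).continuousAt.eventually
          ((hg.of_le (by simp)).eventually (by simp))
      filter_upwards [hsmooth, eventually_ne_nhds hz] with x hgx hx using ih hgx hx
    have hdiff : DifferentiableAt ℝ (iteratedDeriv n g) (z ^ 2) :=
      differentiableAt_iteratedDeriv (mod_cast hg)
    rw [Function.iterate_succ_apply', derivDiv_congr hnear,
      derivDiv_comp_sq (g := fun w => 2 ^ n * iteratedDeriv n g w) (hdiff.const_mul _) hz,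
      deriv_const_mul _ hdiff, iteratedDeriv_succ]
    ring

lemma hasSum_iterate_derivDiv_comp_sq {p : FormalMultilinearSeries ℝ ℝ ℝ} {r : ENNReal}
    (hg : HasFPowerSeriesOnBall g p 0 r) (hz : z ≠ 0) (hzr : z ^ 2 ∈ Metric.eball 0 r) (n : ℕ) :
    HasSum (fun k => 2 ^ n * ((k + 1).ascFactorial n * p.coeff (k + n)) * z ^ (2 * k))
      (derivDiv^[n] (fun x => g (x ^ 2)) z) := by
  rw [iterate_derivDiv_comp_sq (hg.analyticAt_of_mem hzr).contDiffAt hz]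
  have hsum := ((hasFPowerSeriesOnBall_iteratedDeriv hg n).hasSum_sub hzr).mul_left (2 ^ n)
  refine hsum.congr_fun fun k => ?_
  rw [FormalMultilinearSeries.apply_eq_pow_smul_coeff, coeff_iterate_termwiseDeriv,
    sub_zero, ← pow_mul, smul_eq_mul, nsmul_eq_mul]
  ring

end DerivDiv

/-- The power series `∑ w ^ k / (2 k)!` of the entire function `w ↦ cosh √w`. -/
noncomputable def coshSqrtSeries : FormalMultilinearSeries ℝ ℝ ℝ :=
  .ofScalars ℝ fun k => ((2 * k)! : ℝ)⁻¹

lemma coeff_coshSqrtSeries (k : ℕ) : coshSqrtSeries.coeff k = ((2 * k)! : ℝ)⁻¹ :=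
  FormalMultilinearSeries.coeff_ofScalars

lemma radius_coshSqrtSeries : coshSqrtSeries.radius = ⊤ := by
  refine FormalMultilinearSeries.radius_eq_top_of_summable_norm _ fun r => ?_
  refine (Real.hasSum_cosh (√r)).summable.congr fun k => ?_
  rw [FormalMultilinearSeries.norm_apply_eq_norm_coef, coeff_coshSqrtSeries, pow_mul,
    Real.sq_sqrt r.coe_nonneg, norm_inv, RCLike.norm_natCast, div_eq_inv_mul]

lemma hasFPowerSeriesOnBall_coshSqrtSeries :
    HasFPowerSeriesOnBall coshSqrtSeries.sum coshSqrtSeries 0 ⊤ := by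
  have hpos : 0 < coshSqrtSeries.radius := by simp [radius_coshSqrtSeries]
  simpa only [radius_coshSqrtSeries] using coshSqrtSeries.hasFPowerSeriesOnBall hpos

lemma cosh_eq_coshSqrtSeries_sum_sq : Real.cosh = fun x => coshSqrtSeries.sum (x ^ 2) := by
  funext x
  rw [Real.cosh_eq_tsum, FormalMultilinearSeries.sum]
  refine tsum_congr fun k => ?_
  rw [FormalMultilinearSeries.apply_eq_pow_smul_coeff, coeff_coshSqrtSeries, smul_eq_mul,
    ← pow_mul, div_eq_mul_inv]

lemma hasSum_iterate_derivDiv_cosh (n : ℕ) {z : ℝ} (hz : z ≠ 0) :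
    HasSum (fun k : ℕ => 2 ^ n * (k + n)! * z ^ (2 * k) / (k ! * (2 * k + 2 * n)!))
      (derivDiv^[n] Real.cosh z) := by
  rw [cosh_eq_coshSqrtSeries_sum_sq]
  refine (hasSum_iterate_derivDiv_comp_sq hasFPowerSeriesOnBall_coshSqrtSeries hz
    (by simp) n).congr_fun fun k => ?_
  rw [coeff_coshSqrtSeries, ← Nat.factorial_mul_ascFactorial, mul_add]
  push_cast
  field_simp

lemma div_gaussEvenMoment_add (n k : ℕ) (x : ℝ) :
    x / (2 ^ k * k ! * gaussEvenMoment (k + n))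
      = 2 ^ n * (k + n)! * x / (k ! * (2 * k + 2 * n)!) := by
  rw [gaussEvenMoment, mul_add, pow_add]
  field_simp

/-- For every `n` and every `z ≠ 0`, the `n`-th iterate of `T(f)(x) = f'(x)/x`
applied to `cosh` satisfies
`Tⁿ(cosh)(z) = ∑ₖ z^{2k}/(2ᵏ k! C_{2k+2n}) = ∑ₖ 2ⁿ (k+n)! z^{2k}/(k! (2k+2n)!)`. -/
theorem iterated_derivDiv_cosh (n : ℕ) (z : ℝ) (hz : z ≠ 0) :
    (derivDiv^[n] Real.cosh) z
        = ∑' k : ℕ, z ^ (2 * k)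
            / (2 ^ k * (Nat.factorial k) * gaussEvenMoment (k + n)) ∧
    (derivDiv^[n] Real.cosh) z
        = ∑' k : ℕ, 2 ^ n * (Nat.factorial (k + n)) * z ^ (2 * k)
            / ((Nat.factorial k) * (Nat.factorial (2 * k + 2 * n))) := by
  simp only [div_gaussEvenMoment_add, and_self]
  exact (hasSum_iterate_derivDiv_cosh n hz).tsum_eq.symm
end

section
/- Let C_α = ∫_ℝ |x|^α (2π)^{−1/2} e^{−x²/2} dx for α ≥ 0 (the α-th absolute moment of a standard Gaussian). Then for every real δ ≥ 1 and all integers i, k ≥ 0, C_{2(i+k)+δ−1} / (C_{2k+δ−1} · C_{2i+δ−1}) = Σ_{j=0}^{i} k(k−1)⋯(k−j+1) · binom(i,j) · 2^j / C_{2j+δ−1}, where the falling factorial k(k−1)⋯(k−j+1) is taken to equal 1 when j = 0. -/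
open MeasureTheory

/-- `C_α = ∫ |x|^α (2π)^{−1/2} e^{−x²/2} dx`, the `α`-th absolute moment of a
standard Gaussian. -/
noncomputable def gaussAbsMoment (α : ℝ) : ℝ :=
  ∫ x : ℝ, |x| ^ α * (Real.sqrt (2 * Real.pi))⁻¹ * Real.exp (-x ^ 2 / 2)

/-!
With `a = δ / 2`, the recurrence `C_{α+2} = (α + 1) C_α` gives
`C_{2n+δ-1} = 2ⁿ (a)_n C_{δ-1}`, where `(a)_n` is the rising factorial. The claimed identity becomes
`∑ j, binom(i,j) x(x-1)⋯(x-j+1) / (a)_j = (x + a)_i / (a)_i`, which is the Chu–Vandermonde identity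
for the falling factorial of `x + (a + i - 1)`, because `(b)_n = (b + n - 1)⋯(b + 1) b`.
-/

section Pochhammer

open Polynomial

theorem ascPochhammer_add_eval {R : Type*} [CommSemiring R] (m n : ℕ) (a : R) :
    (ascPochhammer R (m + n)).eval a
      = (ascPochhammer R m).eval a * (ascPochhammer R n).eval (a + m) := by
  simp only [← ascPochhammer_mul, eval_mul, eval_comp, eval_add, eval_X, eval_natCast]

theorem descPochhammer_smeval_eq_eval {R : Type*} [Ring R] (n : ℕ) (x : R) :
    (descPochhammer ℤ n).smeval x = (descPochhammer R n).eval x := by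
  rw [descPochhammer_smeval_eq_ascPochhammer, ascPochhammer_smeval_eq_eval,
    descPochhammer_eval_eq_ascPochhammer]

theorem descPochhammer_eval_add_sub_one {R : Type*} [Ring R] (n : ℕ) (a : R) :
    (descPochhammer R n).eval (a + n - 1) = (ascPochhammer R n).eval a := by
  rw [descPochhammer_eval_eq_ascPochhammer]
  congr 1
  abel

theorem ascPochhammer_eval_add_eq_sum {R : Type*} [CommRing R] (n : ℕ) (x a : R) :
    (ascPochhammer R n).eval (x + a)
      = ∑ j ∈ Finset.range (n + 1), (n.choose j : R)
          * ((descPochhammer R j).eval x * (ascPochhammer R (n - j)).eval (a + j)) := by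
  have vandermonde := Ring.descPochhammer_smeval_add n (Commute.all x (a + n - 1))
  simp only [descPochhammer_smeval_eq_eval, Finset.Nat.sum_antidiagonal_eq_sum_range_succ_mk,
    ← add_sub_assoc, ← add_assoc, descPochhammer_eval_add_sub_one] at vandermonde
  rw [vandermonde]
  refine Finset.sum_congr rfl fun j hj => ?_
  have hjn : j ≤ n := Finset.mem_range_succ_iff.mp hj
  have shift : a + n - 1 = a + j + (n - j : ℕ) - 1 := by
    push_cast [hjn]
    ring
  rw [shift, descPochhammer_eval_add_sub_one]

theorem sum_choose_mul_descPochhammer_div_ascPochhammer {K : Type*} [Field K] {n : ℕ} {a : K}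
    (ha : (ascPochhammer K n).eval a ≠ 0) (x : K) :
    ∑ j ∈ Finset.range (n + 1),
        (n.choose j : K) * (descPochhammer K j).eval x / (ascPochhammer K j).eval a
      = (ascPochhammer K n).eval (x + a) / (ascPochhammer K n).eval a := by
  rw [ascPochhammer_eval_add_eq_sum, Finset.sum_div]
  refine Finset.sum_congr rfl fun j hj => ?_
  have asc_split : (ascPochhammer K n).eval a
      = (ascPochhammer K j).eval a * (ascPochhammer K (n - j)).eval (a + j) := by
    rw [← ascPochhammer_add_eval, Nat.add_sub_of_le (Finset.mem_range_succ_iff.mp hj)]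
  rw [asc_split] at ha ⊢
  rw [← mul_assoc, mul_div_mul_right _ _ (right_ne_zero_of_mul ha)]

end Pochhammer

section Moments

variable {α : ℝ}

theorem gaussAbsMoment_eq_Gamma (hα : -1 < α) :
    gaussAbsMoment α = 2 ^ (α / 2) * Real.Gamma ((α + 1) / 2) / √Real.pi := by
  have half_line : ∫ x in Set.Ioi (0 : ℝ), x ^ α * Real.exp (-(1 / 2) * x ^ (2 : ℝ))
      = (1 / 2) ^ (-(α + 1) / 2) * (1 / 2) * Real.Gamma ((α + 1) / 2) :=
    integral_rpow_mul_exp_neg_mul_rpow two_pos hα one_half_pos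
  have even_integrand (x : ℝ) : |x| ^ α * (√(2 * Real.pi))⁻¹ * Real.exp (-x ^ 2 / 2)
      = (√(2 * Real.pi))⁻¹ * (|x| ^ α * Real.exp (-(1 / 2) * |x| ^ (2 : ℝ))) := by
    rw [Real.rpow_two, sq_abs, neg_div, neg_mul, one_div_mul_eq_div]
    ring
  have two_rpow : (1 / 2 : ℝ) ^ (-(α + 1) / 2) = 2 ^ (α / 2) * √2 := by
    rw [one_div, Real.inv_rpow two_pos.le, ← Real.rpow_neg two_pos.le, Real.sqrt_eq_rpow,
      ← Real.rpow_add two_pos]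
    congr 1
    ring
  simp only [gaussAbsMoment, even_integrand]
  rw [integral_const_mul,
    integral_comp_abs (f := fun x => x ^ α * Real.exp (-(1 / 2) * x ^ (2 : ℝ))),
    half_line, two_rpow, Real.sqrt_mul two_pos.le]
  field_simp

theorem gaussAbsMoment_pos (hα : -1 < α) : 0 < gaussAbsMoment α := by
  have Gamma_pos : 0 < Real.Gamma ((α + 1) / 2) := Real.Gamma_pos_of_pos (by linarith)
  rw [gaussAbsMoment_eq_Gamma hα]
  positivity

theorem gaussAbsMoment_add_two (hα : -1 < α) :
    gaussAbsMoment (α + 2) = (α + 1) * gaussAbsMoment α := by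
  rw [gaussAbsMoment_eq_Gamma hα, gaussAbsMoment_eq_Gamma (by linarith),
    show (α + 2 + 1) / 2 = (α + 1) / 2 + 1 by ring, Real.Gamma_add_one (by linarith),
    show (α + 2) / 2 = α / 2 + 1 by ring, Real.rpow_add_one two_ne_zero]
  ring

theorem gaussAbsMoment_add_two_mul_nat (hα : -1 < α) (n : ℕ) :
    gaussAbsMoment (α + 2 * n)
      = 2 ^ n * (ascPochhammer ℝ n).eval ((α + 1) / 2) * gaussAbsMoment α := by
  induction n with
  | zero => simp
  | succ n ih =>
    have hn : -1 < α + 2 * n := by linarith [n.cast_nonneg (α := ℝ)]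
    rw [Nat.cast_succ, mul_add_one, ← add_assoc, gaussAbsMoment_add_two hn, ih,
      ascPochhammer_succ_eval]
    ring

end Moments

theorem gaussAbsMoment_ratio_falling_factorial_general {δ x : ℝ} (hδ : 0 < δ)
    (hx : 0 < 2 * x + δ) (i : ℕ) :
    gaussAbsMoment (2 * (i + x) + δ - 1)
        / (gaussAbsMoment (2 * x + δ - 1) * gaussAbsMoment (2 * (i : ℝ) + δ - 1))
      = ∑ j ∈ Finset.range (i + 1),
          (∏ l ∈ Finset.range j, (x - l))
            * (Nat.choose i j : ℝ) * 2 ^ j / gaussAbsMoment (2 * (j : ℝ) + δ - 1) := by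
  have moment_shift {y : ℝ} (hy : 0 < 2 * y + δ) (n : ℕ) :
      gaussAbsMoment (2 * (n + y) + δ - 1)
        = 2 ^ n * (ascPochhammer ℝ n).eval (y + δ / 2) * gaussAbsMoment (2 * y + δ - 1) := by
    convert gaussAbsMoment_add_two_mul_nat (α := 2 * y + δ - 1) (by linarith) n using 4 <;> ring
  have moment_nat (n : ℕ) : gaussAbsMoment (2 * (n : ℝ) + δ - 1)
      = 2 ^ n * (ascPochhammer ℝ n).eval (δ / 2) * gaussAbsMoment (δ - 1) := by
    simpa using moment_shift (y := 0) (by simpa using hδ) n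
  have moment_ne_zero : gaussAbsMoment (2 * x + δ - 1) ≠ 0 :=
    (gaussAbsMoment_pos (by linarith)).ne'
  have asc_ne_zero : (ascPochhammer ℝ i).eval (δ / 2) ≠ 0 :=
    (ascPochhammer_pos i _ (half_pos hδ)).ne'
  calc
    _ = (ascPochhammer ℝ i).eval (x + δ / 2) / (ascPochhammer ℝ i).eval (δ / 2)
          / gaussAbsMoment (δ - 1) := by
      rw [moment_shift hx, moment_nat, mul_comm _ (gaussAbsMoment (2 * x + δ - 1)),
        mul_div_mul_left _ _ moment_ne_zero, mul_assoc,
        mul_div_mul_left _ _ (pow_ne_zero i two_ne_zero), div_div]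
    _ = _ := by
      rw [← sum_choose_mul_descPochhammer_div_ascPochhammer asc_ne_zero, Finset.sum_div]
      refine Finset.sum_congr rfl fun j _ => ?_
      rw [moment_nat, descPochhammer_eval_eq_prod_range]
      field_simp

/-- For `δ ≥ 1` and `i, k ∈ ℕ`,
`C_{2(i+k)+δ−1}/(C_{2k+δ−1} C_{2i+δ−1})
  = ∑_{j=0}^i k(k−1)⋯(k−j+1) binom(i,j) 2^j / C_{2j+δ−1}`. -/
theorem gaussAbsMoment_ratio_falling_factorial (δ : ℝ) (hδ : 1 ≤ δ) (i k : ℕ) :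
    gaussAbsMoment (2 * ((i : ℝ) + k) + δ - 1)
        / (gaussAbsMoment (2 * (k : ℝ) + δ - 1) * gaussAbsMoment (2 * (i : ℝ) + δ - 1))
      = ∑ j ∈ Finset.range (i + 1),
          (∏ l ∈ Finset.range j, ((k : ℝ) - l))
            * (Nat.choose i j : ℝ) * 2 ^ j / gaussAbsMoment (2 * (j : ℝ) + δ - 1) :=
  have δ_pos : 0 < δ := one_pos.trans_le hδ
  gaussAbsMoment_ratio_falling_factorial_general δ_pos (by positivity) i
end
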